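/- arXiv:math/9908014 — 3 statements merged into one kernel-verified Lean document; each statement's English description precedes it below -/
import Mathlib

section
/- For every real λ > 0, every real E, every integer n ≥ 1 and every finite sequence x_0, …, x_{n−1} of real numbers, letting A(t) denote the 2×2 real matrix [[E + λ·cos t, −1], [1, 0]] and ‖·‖ the operator norm on the Euclidean plane, one has (1/(2π)) · ∫_0^{2π} log ‖A(x_{n−1}+α) · A(x_{n−2}+α) ⋯ A(x_0+α)‖ dα ≥ n · log(λ/2). -/
open Real

/-- The one-step transfer matrix `[[E + λ·cos t, −1], [1, 0]]`. -/
noncomputable def transferMatrix (E lam t : ℝ) : Matrix (Fin 2) (Fin 2) ℝ :=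
  !![E + lam * Real.cos t, -1; 1, 0]

/-- The operator norm of a `2×2` real matrix acting on the Euclidean plane. -/
noncomputable def euclideanOpNorm (A : Matrix (Fin 2) (Fin 2) ℝ) : ℝ :=
  ‖LinearMap.toContinuousLinearMap (Matrix.toEuclideanLin A)‖

open Polynomial in
/-- Complexified, rescaled transfer matrix `z ↦ z A(z)` as a matrix of polynomials. -/
noncomputable def polyTransfer (E lam t : ℝ) : Matrix (Fin 2) (Fin 2) (Polynomial ℂ) :=
  !![C ((lam / 2 : ℂ) * Complex.exp (-(t * Complex.I))) + C (E : ℂ) * X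
      + C ((lam / 2 : ℂ) * Complex.exp (t * Complex.I)) * X ^ 2, -X; X, 0]

lemma polyTransfer_eval (E lam t α : ℝ) :
    (Polynomial.evalRingHom (circleMap 0 1 α)).mapMatrix (polyTransfer E lam t)
      = (circleMap 0 1 α) • (Complex.ofRealHom.mapMatrix (transferMatrix E lam (t + α))) := by
  ext i j
  fin_cases i <;> fin_cases j <;> simp [polyTransfer, transferMatrix, circleMap_zero]
  have h1 : Complex.exp (-(t * Complex.I)) = 
      Complex.exp (α * Complex.I) * Complex.exp (-((t + α) * Complex.I)) := by
    rw [← Complex.exp_add]; congr 1; ring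
  have h2 : Complex.exp ((t + α) * Complex.I) = 
      Complex.exp (t * Complex.I) * Complex.exp (α * Complex.I) := by
    rw [← Complex.exp_add]; congr 1; ring
  rw [Complex.cos, neg_mul, h2, h1]
  ring

lemma polyTransfer_prod_eval (E lam α : ℝ) (l : List ℝ) :
    (Polynomial.evalRingHom (circleMap 0 1 α)).mapMatrix (l.map (polyTransfer E lam)).prod
      = (circleMap 0 1 α) ^ l.length • (Complex.ofRealHom.mapMatrix
          (l.map (fun t => transferMatrix E lam (t + α))).prod) := by
  induction l with
  | nil => simp
  | cons a l ih =>
    simp only [List.map_cons, List.prod_cons, List.length_cons, map_mul, ih, polyTransfer_eval]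
    rw [smul_mul_smul_comm, pow_succ']

lemma polyTransfer_prod_coeff (E lam : ℝ) (hlam : 0 < lam) (l : List ℝ) :
    ‖((l.map (polyTransfer E lam)).prod 0 0).coeff 0‖ = (lam / 2) ^ l.length := by
  induction l with
  | nil => simp
  | cons a l ih =>
    simp only [List.map_cons, List.prod_cons, List.length_cons]
    have : ((polyTransfer E lam a * (l.map (polyTransfer E lam)).prod) 0 0).coeff 0
        = ((lam / 2 : ℂ) * Complex.exp (-(a * Complex.I))) *
          ((l.map (polyTransfer E lam)).prod 0 0).coeff 0 := by
      rw [Matrix.mul_apply, Fin.sum_univ_two]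
      simp [polyTransfer, Polynomial.mul_coeff_zero]
    have h2 : ‖Complex.exp (-(a * Complex.I))‖ = 1 := by
      rw [← neg_mul, ← Complex.ofReal_neg, Complex.norm_exp_ofReal_mul_I]
    rw [this, norm_mul, norm_mul, h2, ih, pow_succ']
    simp [abs_of_pos hlam]

lemma transfer_prod_det (E lam α : ℝ) (l : List ℝ) :
    (l.map (fun t => transferMatrix E lam (t + α))).prod.det = 1 := by
  induction l with
  | nil => simp
  | cons a l ih =>
    rw [List.map_cons, List.prod_cons, Matrix.det_mul, ih]
    simp [transferMatrix, Matrix.det_fin_two]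

lemma col_le_opNorm (A : Matrix (Fin 2) (Fin 2) ℝ) (j : Fin 2) :
    A 0 j ^ 2 + A 1 j ^ 2 ≤ euclideanOpNorm A ^ 2 := by
  have h := (LinearMap.toContinuousLinearMap (Matrix.toEuclideanLin A)).le_opNorm
    (EuclideanSpace.single j 1)
  have h1 : ‖EuclideanSpace.single j (1:ℝ)‖ = 1 := by simp
  rw [h1, mul_one] at h
  have h2 := pow_le_pow_left₀ (norm_nonneg _) h 2
  rw [EuclideanSpace.norm_sq_eq, Fin.sum_univ_two] at h2
  simpa [Matrix.toLpLin_apply, euclideanOpNorm] using h2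

lemma one_le_opNorm (A : Matrix (Fin 2) (Fin 2) ℝ) (hA : A.det = 1) : 1 ≤ euclideanOpNorm A := by
  have h0 := col_le_opNorm A 0
  have h1 := col_le_opNorm A 1
  have hn : 0 ≤ euclideanOpNorm A := norm_nonneg _
  rw [Matrix.det_fin_two] at hA
  by_contra! h
  have h2 : euclideanOpNorm A ^ 2 < 1 := by nlinarith
  nlinarith [sq_nonneg (A 0 0 - A 1 1), sq_nonneg (A 0 1 + A 1 0)]

lemma entry_le_opNorm (A : Matrix (Fin 2) (Fin 2) ℝ) : |A 0 0| ≤ euclideanOpNorm A := by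
  have h0 := col_le_opNorm A 0
  exact abs_le_of_sq_le_sq (by nlinarith [sq_nonneg (A 1 0)]) (norm_nonneg _)

lemma continuous_euclideanOpNorm : Continuous euclideanOpNorm := by
  have : Continuous (((Matrix.toEuclideanLin (𝕜 := ℝ) (m := Fin 2) (n := Fin 2)).trans
      LinearMap.toContinuousLinearMap).toLinearMap) :=
    LinearMap.continuous_of_finiteDimensional _
  exact this.norm

lemma continuous_transfer_prod (E lam : ℝ) (l : List ℝ) :
    Continuous (fun α : ℝ => (l.map (fun t => transferMatrix E lam (t + α))).prod) := by
  refine continuous_list_prod l fun t _ => ?_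
  refine continuous_matrix fun i j => ?_
  fin_cases i <;> fin_cases j <;> simp [transferMatrix] <;> fun_prop

lemma herman_list (lam E : ℝ) (hlam : 0 < lam) (l : List ℝ) :
    (l.length : ℝ) * Real.log (lam / 2) ≤ (2 * π)⁻¹ * (∫ α in (0:ℝ)..(2 * π),
      Real.log (euclideanOpNorm (l.map (fun t => transferMatrix E lam (t + α))).prod)) := by
  set p := (l.map (polyTransfer E lam)).prod 0 0 with hp
  have hc : ‖p.coeff 0‖ = (lam / 2) ^ l.length := polyTransfer_prod_coeff E lam hlam l
  have hpos : 0 < (lam / 2) ^ l.length := by positivity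
  have h1 : (lam / 2) ^ l.length ≤ p.mahlerMeasure := by
    have := p.norm_coeff_le_choose_mul_mahlerMeasure 0
    simpa [hc] using this
  have h2 : (l.length : ℝ) * Real.log (lam / 2) ≤ p.logMahlerMeasure := by
    rw [Polynomial.logMahlerMeasure_eq_log_MahlerMeasure, ← Real.log_pow]
    exact Real.log_le_log hpos h1
  refine h2.trans ?_
  rw [Polynomial.logMahlerMeasure_def, Real.circleAverage_def, smul_eq_mul]
  refine mul_le_mul_of_nonneg_left ?_ (by positivity)
  refine intervalIntegral.integral_mono_on (by positivity) p.intervalIntegrable_mahlerMeasure ?_ ?_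
  · refine Continuous.intervalIntegrable ?_ _ _
    refine Continuous.log (continuous_euclideanOpNorm.comp (continuous_transfer_prod E lam l)) ?_
    intro α
    exact (zero_lt_one.trans_le (one_le_opNorm _ (transfer_prod_det E lam α l))).ne'
  · intro α _
    have hM := one_le_opNorm _ (transfer_prod_det E lam α l)
    have he := congrFun (congrFun (polyTransfer_prod_eval E lam α l) 0) 0
    have hle : ‖p.eval (circleMap 0 1 α)‖ ≤
        euclideanOpNorm (l.map (fun t => transferMatrix E lam (t + α))).prod := by
      simp only [RingHom.mapMatrix_apply, Matrix.map_apply, Matrix.smul_apply,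
        Polynomial.coe_evalRingHom, ← hp] at he
      rw [he, norm_smul, norm_pow]
      simpa using entry_le_opNorm _
    rcases (norm_nonneg (p.eval (circleMap 0 1 α))).eq_or_lt with h | h
    · simp only [← h, Real.log_zero]
      exact Real.log_nonneg hM
    · exact Real.log_le_log h hle

/-- Herman's subharmonicity estimate: for `λ > 0`, any real `E`, any `n ≥ 1` and any
sequence of angles `x_0, …, x_{n−1}`, the average over the rotation parameter `α` of
`log ‖A(x_{n−1}+α) ⋯ A(x_0+α)‖` is at least `n · log(λ/2)`. -/
theorem herman_subharmonicity_estimate (lam E : ℝ) (hlam : 0 < lam)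
    (n : ℕ) (hn : 1 ≤ n) (x : Fin n → ℝ) :
    (1 / (2 * π)) *
        (∫ α in (0:ℝ)..(2 * π),
          Real.log (euclideanOpNorm
            ((List.ofFn (fun i : Fin n => transferMatrix E lam (x i + α))).reverse.prod)))
      ≥ (n : ℝ) * Real.log (lam / 2) := by
  have h := herman_list lam E hlam (List.ofFn x).reverse
  simp only [List.length_reverse, List.length_ofFn] at h
  rw [ge_iff_le, one_div]
  refine h.trans (le_of_eq ?_)
  simp only [List.map_reverse, List.map_ofFn, Function.comp_def]
end

section
/- Lax approximation by cyclic cube exchange transformations (two-dimensional case): let T be a homeomorphism of the torus 𝕋² = (ℝ/ℤ) × (ℝ/ℤ) which preserves the Haar (Lebesgue) probability measure. Then for every ε > 0 there exist a positive integer n and a permutation σ of the index set {0,…,n−1} × {0,…,n−1} which is a single cycle on the whole index set (a cyclic permutation of all n² indices), such that for every point x of the torus and every index k = (k₁,k₂): if x has a representative (t₁,t₂) with t_i ∈ [k_i/n, (k_i+1)/n) for i = 1,2, then dist( T(x), x + ((σ(k)₁ − k₁)/n, (σ(k)₂ − k₂)/n) ) ≤ ε, where dist is the sup-distance on 𝕋²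 induced by the geodesic distance on each circle factor and the additive shift is taken in the torus. -/
open MeasureTheory

namespace LaxAux

theorem merge_base {X : Type*} [Fintype X] [DecidableEq X] (g : Equiv.Perm X) (a b : X)
    (hab : ¬ g.SameCycle a b) : (Equiv.swap a b * g).SameCycle a b := by
  classical
  have hex : ∃ m : ℕ, 0 < m ∧ (g ^ m) a = a :=
    ⟨orderOf g, orderOf_pos g, by rw [pow_orderOf_eq_one]; rfl⟩
  obtain ⟨hm0, hma⟩ := Nat.find_spec hex
  have hmin := fun i (hi : i < Nat.find hex) => Nat.find_min hex hi
  generalize Nat.find hex = m at *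
  have key : ∀ i < m, ((Equiv.swap a b * g) ^ i) a = (g ^ i) a := by
    intro i
    induction i with
    | zero => intro _; rfl
    | succ i ih =>
      intro hi
      rw [pow_succ', Equiv.Perm.mul_apply, ih (by omega), Equiv.Perm.mul_apply,
        ← Equiv.Perm.mul_apply g, ← pow_succ']
      apply Equiv.swap_apply_of_ne_of_ne
      · intro h; exact hmin _ hi ⟨by omega, h⟩
      · intro h; exact hab ⟨((i + 1 : ℕ) : ℤ), by rw [zpow_natCast]; exact h⟩
  obtain ⟨j, rfl⟩ : ∃ j, m = j + 1 := ⟨m - 1, by omega⟩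
  refine ⟨((j + 1 : ℕ) : ℤ), ?_⟩
  rw [zpow_natCast, pow_succ', Equiv.Perm.mul_apply, key j (by omega), Equiv.Perm.mul_apply,
        ← Equiv.Perm.mul_apply g, ← pow_succ', hma, Equiv.swap_apply_left]

theorem sameCycle_of_step {X : Type*} [Fintype X] (g h : Equiv.Perm X)
    (H : ∀ x, h.SameCycle x (g x)) {x y : X} (hxy : g.SameCycle x y) : h.SameCycle x y := by
  obtain ⟨i, rfl⟩ := hxy.exists_nat_pow_eq
  induction i with
  | zero => exact Equiv.Perm.SameCycle.refl _ _
  | succ i ih =>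
    rw [pow_succ', Equiv.Perm.mul_apply]
    exact (ih ⟨i, by simp⟩).trans (H _)

theorem merge_mono {X : Type*} [Fintype X] [DecidableEq X] (g : Equiv.Perm X) (a b : X)
    (hab : ¬ g.SameCycle a b) {x y : X} (hxy : g.SameCycle x y) :
    (Equiv.swap a b * g).SameCycle x y := by
  have hb := merge_base g a b hab
  refine sameCycle_of_step g _ (fun z => ?_) hxy
  have h1 : (Equiv.swap a b * g).SameCycle z ((Equiv.swap a b * g) z) := ⟨1, by simp⟩
  refine h1.trans ?_
  rw [Equiv.Perm.mul_apply]
  by_cases h2 : g z = a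
  · rw [h2, Equiv.swap_apply_left]; exact hb.symm
  by_cases h3 : g z = b
  · rw [h3, Equiv.swap_apply_right]; exact hb
  rw [Equiv.swap_apply_of_ne_of_ne h2 h3]

theorem batch {X : Type*} [Fintype X] [DecidableEq X] (f : X → X) (hf : ∀ x, f (f x) = x)
    (s : Equiv.Perm X) : ∃ r : Equiv.Perm X, (∀ x, r x = s x ∨ r x = f (s x)) ∧
      (∀ x, r.SameCycle x (f x)) ∧ ∀ x y, s.SameCycle x y → r.SameCycle x y := by
  have main : ∀ S : Finset X, ∃ t : Equiv.Perm X, (∀ x, t x = x ∨ t x = f x) ∧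
      (∀ x, x ∉ S → f x ∉ S → t x = x) ∧
      (∀ x ∈ S, (t * s).SameCycle x (f x)) ∧ ∀ x y, s.SameCycle x y → (t * s).SameCycle x y := by
    intro S
    induction S using Finset.induction_on with
    | empty => exact ⟨1, by simp, by simp, by simp, by simp⟩
    | insert a S ha ih =>
      obtain ⟨t, h1, h2, h3, h4⟩ := ih
      by_cases hc : (t * s).SameCycle a (f a)
      · refine ⟨t, h1, ?_, ?_, h4⟩
        · intro x hx hx'
          simp only [Finset.mem_insert, not_or] at hx hx'
          exact h2 x hx.2 hx'.2
        · intro x hx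
          rcases Finset.mem_insert.1 hx with rfl | hx
          · exact hc
          · exact h3 x hx
      · have hfa : f a ∉ S := fun h => hc (by have := h3 _ h; rw [hf] at this; exact this.symm)
        have ta : t a = a := h2 a ha hfa
        have tfa : t (f a) = f a := h2 _ hfa (by rw [hf]; exact ha)
        refine ⟨Equiv.swap a (f a) * t, ?_, ?_, ?_, ?_⟩
        · intro x
          rw [Equiv.Perm.mul_apply]
          by_cases hx : t x = a
          · have : x = a := t.injective (hx.trans ta.symm)
            subst this
            right; rw [hx, Equiv.swap_apply_left]
          by_cases hx' : t x = f a
          · have : x = f a := t.injective (hx'.trans tfa.symm)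
            subst this
            right; rw [hx', Equiv.swap_apply_right, hf]
          rw [Equiv.swap_apply_of_ne_of_ne hx hx']
          exact h1 x
        · intro x hx hx'
          simp only [Finset.mem_insert, not_or] at hx hx'
          rw [Equiv.Perm.mul_apply, h2 x hx.2 hx'.2]
          apply Equiv.swap_apply_of_ne_of_ne hx.1
          intro h; apply hx'.1; rw [h, hf]
        · intro x hx
          rw [mul_assoc]
          rcases Finset.mem_insert.1 hx with rfl | hx
          · exact merge_base _ _ _ hc
          · exact merge_mono _ _ _ hc (h3 x hx)
        · intro x y hxy
          rw [mul_assoc]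
          exact merge_mono _ _ _ hc (h4 x y hxy)
  obtain ⟨t, h1, -, h3, h4⟩ := main Finset.univ
  exact ⟨t * s, fun x => h1 (s x), fun x => h3 x (Finset.mem_univ _), h4⟩

theorem cyclic_fin (N : ℕ) (s : Equiv.Perm (Fin N)) : ∃ r : Equiv.Perm (Fin N),
    (∀ i j, r.SameCycle i j) ∧ ∀ i, (r i : ℕ) ≤ (s i : ℕ) + 2 ∧ (s i : ℕ) ≤ (r i : ℕ) + 2 := by
  let f : Fin N → Fin N := fun i =>
    if h : (i : ℕ) % 2 = 0 then (if h' : (i : ℕ) + 1 < N then ⟨i + 1, h'⟩ else i)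
      else ⟨(i : ℕ) - 1, by omega⟩
  let g : Fin N → Fin N := fun i =>
    if h : (i : ℕ) % 2 = 1 then (if h' : (i : ℕ) + 1 < N then ⟨i + 1, h'⟩ else i)
      else ⟨(i : ℕ) - 1, by omega⟩
  have fv : ∀ i, (f i : ℕ) = if (i : ℕ) % 2 = 0 then (if (i : ℕ) + 1 < N then (i : ℕ) + 1 else i)
      else (i : ℕ) - 1 := by
    intro i; simp only [f]; split_ifs <;> rfl
  have gv : ∀ i, (g i : ℕ) = if (i : ℕ) % 2 = 1 then (if (i : ℕ) + 1 < N then (i : ℕ) + 1 else i)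
      else (i : ℕ) - 1 := by
    intro i; simp only [g]; split_ifs <;> rfl
  have hf : ∀ i, f (f i) = i := by
    intro i; have := i.2; apply Fin.ext; rw [fv, fv]; split_ifs <;> omega
  have hg : ∀ i, g (g i) = i := by
    intro i; have := i.2; apply Fin.ext; rw [gv, gv]; split_ifs <;> omega
  obtain ⟨p, p1, p2, p3⟩ := batch f hf s
  obtain ⟨r, r1, r2, r3⟩ := batch g hg p
  refine ⟨r, ?_, ?_⟩
  · have step : ∀ (i : ℕ) (h : i + 1 < N), r.SameCycle ⟨i, by omega⟩ ⟨i + 1, h⟩ := by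
      intro i h
      rcases Nat.mod_two_eq_zero_or_one i with h0 | h0
      · have := r3 _ _ (p2 ⟨i, by omega⟩)
        convert this using 1
        apply Fin.ext; rw [fv]; simp [h0, h]
      · have := (r2 ⟨i, by omega⟩)
        convert this using 1
        apply Fin.ext; rw [gv]; simp [h0, h]
    have all : ∀ (i : ℕ) (h : i < N), r.SameCycle ⟨0, by omega⟩ ⟨i, h⟩ := by
      intro i
      induction i with
      | zero => intro h; exact Equiv.Perm.SameCycle.refl _ _
      | succ i ih => intro h; exact (ih (by omega)).trans (step i h)
    intro i j
    exact (all i i.2).symm.trans (all j j.2)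
  · intro i
    have a1 : (p i : ℕ) ≤ s i + 1 ∧ (s i : ℕ) ≤ p i + 1 := by
      rcases p1 i with h | h
      · rw [h]; omega
      · rw [h, fv]; split_ifs <;> omega
    have a2 : (r i : ℕ) ≤ p i + 1 ∧ (p i : ℕ) ≤ r i + 1 := by
      rcases r1 i with h | h
      · rw [h]; omega
      · rw [h, gv]; split_ifs <;> omega
    omega

/-- the circle -/
abbrev C := AddCircle (1 : ℝ)

/-- arcs -/
def arc (n a : ℕ) : Set C := (fun t : ℝ => (t : C)) '' Set.Ico ((a : ℝ) / n) (((a : ℝ) + 1) / n)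

theorem dist_coe_le (a b : ℝ) : dist (a : C) (b : C) ≤ |a - b| := by
  rw [dist_eq_norm, ← AddCircle.coe_sub]
  rw [AddCircle.norm_eq]
  simpa using round_le (a - b) 0

theorem arc_inj {n a b : ℕ} (ha : a < n) (hb : b < n) {t s : ℝ}
    (ht : t ∈ Set.Ico ((a : ℝ) / n) (((a : ℝ) + 1) / n))
    (hs : s ∈ Set.Ico ((b : ℝ) / n) (((b : ℝ) + 1) / n)) (h : (t : C) = (s : C)) :
    t = s ∧ a = b := by
  have hn : (0 : ℝ) < n := by exact_mod_cast (by omega : 0 < n)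
  have aux : ∀ {a : ℕ} {t : ℝ}, a < n → t ∈ Set.Ico ((a : ℝ) / n) (((a : ℝ) + 1) / n) →
      t ∈ Set.Ico (0 : ℝ) (0 + 1) := by
    intro a t ha ht
    refine ⟨le_trans (by positivity) ht.1, ht.2.trans_le ?_⟩
    rw [div_le_iff₀ hn]
    have : (a : ℝ) + 1 ≤ n := by exact_mod_cast ha
    linarith
  have hts : t = s := (AddCircle.coe_eq_coe_iff_of_mem_Ico (aux ha ht) (aux hb hs)).1 h
  subst hts
  refine ⟨rfl, ?_⟩
  have h1 := ht.1.trans_lt hs.2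
  have h2 := hs.1.trans_lt ht.2
  rw [div_lt_div_iff_of_pos_right hn] at h1 h2
  have h1' : a < b + 1 := by exact_mod_cast h1
  have h2' : b < a + 1 := by exact_mod_cast h2
  omega

theorem measurable_arc {n a : ℕ} (ha : a < n) : MeasurableSet (arc n a) := by
  refine MeasurableSet.image_of_continuousOn_injOn measurableSet_Ico
    (AddCircle.continuous_mk' (1 : ℝ)).continuousOn ?_
  intro t ht s hs h
  exact (arc_inj ha ha ht hs h).1

theorem volume_arc (n a : ℕ) : (volume : Measure C) (arc n a) = volume (arc n 0) := by
  have : arc n 0 = (fun x : C => x + (((a : ℝ) / n : ℝ) : C)) ⁻¹' arc n a := by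
    ext x
    simp only [arc, Set.mem_image, Set.mem_preimage, Set.mem_Ico]
    constructor
    · rintro ⟨t, ht, rfl⟩
      refine ⟨t + (a : ℝ) / n, ?_, by push_cast; rfl⟩
      rw [add_div]; simp at ht ⊢
      constructor <;> linarith [ht.1, ht.2]
    · rintro ⟨t, ht, h⟩
      refine ⟨t - (a : ℝ) / n, ?_, ?_⟩
      · rw [add_div] at ht; simp at ht ⊢
        constructor <;> linarith [ht.1, ht.2]
      · rw [AddCircle.coe_sub, h, add_sub_cancel_right]
  rw [this, measure_preimage_add_right]

theorem exists_arc {n : ℕ} (hn : 0 < n) (x : C) : ∃ a : Fin n, x ∈ arc n a := by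
  have hn' : (0 : ℝ) < n := by exact_mod_cast hn
  obtain ⟨t, ht, rfl⟩ : ∃ t ∈ Set.Ico (0 : ℝ) (0 + 1), (t : C) = x := by
    have : x ∈ ((↑) : ℝ → C) '' Set.Ico (0 : ℝ) (0 + 1) := by
      rw [AddCircle.coe_image_Ico_eq]; trivial
    exact this
  have h0 : 0 ≤ t * n := mul_nonneg ht.1 hn'.le
  refine ⟨⟨⌊t * n⌋₊, ?_⟩, t, ⟨?_, ?_⟩, rfl⟩
  · rw [Nat.floor_lt h0]; nlinarith [ht.2]
  · rw [div_le_iff₀ hn']; exact Nat.floor_le h0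
  · rw [lt_div_iff₀ hn']; exact Nat.lt_floor_add_one _

/-- squares -/
def sq (n : ℕ) (k : Fin n × Fin n) : Set (C × C) := arc n k.1 ×ˢ arc n k.2

theorem exists_perm (T : (C × C) ≃ₜ (C × C))
    (hT : MeasurePreserving T (volume : Measure (C × C)) volume) {n : ℕ} (hn : 0 < n) :
    ∃ s : Equiv.Perm (Fin n × Fin n), ∀ k, ∃ y ∈ sq n k, T y ∈ sq n (s k) := by
  classical
  let c : ENNReal := (volume : Measure C) (arc n 0) * (volume : Measure C) (arc n 0)
  have vol : ∀ k, (volume : Measure (C × C)) (sq n k) = c := by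
    intro k
    rw [sq, Measure.volume_eq_prod, Measure.prod_prod, volume_arc n k.1, volume_arc n k.2]
  have cov : ∀ x : C × C, ∃ k, x ∈ sq n k := by
    intro x
    obtain ⟨a, ha⟩ := exists_arc hn x.1
    obtain ⟨b, hb⟩ := exists_arc hn x.2
    exact ⟨(a, b), ha, hb⟩
  have meas : ∀ k, MeasurableSet (sq n k) := fun k =>
    (measurable_arc k.1.2).prod (measurable_arc k.2.2)
  have disj : Pairwise (Function.onFun Disjoint (sq n)) := by
    intro k l hkl
    refine Set.disjoint_left.2 fun x hx hx' => hkl ?_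
    obtain ⟨⟨t, ht, h1⟩, ⟨t', ht', h1'⟩⟩ := hx
    obtain ⟨⟨u, hu, h2⟩, ⟨u', hu', h2'⟩⟩ := hx'
    exact Prod.ext (Fin.ext (arc_inj k.1.2 l.1.2 ht hu (h1.trans h2.symm)).2)
      (Fin.ext (arc_inj k.2.2 l.2.2 ht' hu' (h1'.trans h2'.symm)).2)
  have c_top : c ≠ ⊤ := ENNReal.mul_ne_top (measure_ne_top _ _) (measure_ne_top _ _)
  have c_zero : c ≠ 0 := by
    intro h0
    have : (volume : Measure (C × C)) (⋃ k, sq n k) = 0 :=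
      measure_iUnion_null fun k => (vol k).trans h0
    rw [Set.iUnion_eq_univ_iff.2 cov, Measure.measure_univ_eq_zero] at this
    have h1 : (volume : Measure (C × C)) Set.univ = 0 := by rw [this]; simp
    rw [Measure.volume_eq_prod, ← Set.univ_prod_univ, Measure.prod_prod] at h1
    simp at h1
  let N : Fin n × Fin n → Finset (Fin n × Fin n) := fun k =>
    Finset.univ.filter fun l => ∃ y ∈ sq n k, T y ∈ sq n l
  obtain ⟨f, hf, hfN⟩ := (Finset.all_card_le_biUnion_card_iff_exists_injective N).1 (by
    intro A
    have sub : (⋃ k ∈ A, sq n k) ⊆ T ⁻¹' (⋃ l ∈ A.biUnion N, sq n l) := by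
      intro x hx
      simp only [Set.mem_iUnion] at hx
      obtain ⟨k, hk, hx⟩ := hx
      obtain ⟨l, hl⟩ := cov (T x)
      simp only [Set.mem_preimage, Set.mem_iUnion]
      exact ⟨l, Finset.mem_biUnion.2 ⟨k, hk, Finset.mem_filter.2 ⟨Finset.mem_univ _, x, hx, hl⟩⟩, hl⟩
    have h1 : (volume : Measure (C × C)) (⋃ k ∈ A, sq n k) = A.card * c := by
      rw [measure_biUnion_finset (fun k _ l _ h => disj h) (fun k _ => meas k)]
      simp [vol]
    have h2 : (volume : Measure (C × C)) (⋃ l ∈ A.biUnion N, sq n l) ≤ (A.biUnion N).card * c := by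
      refine (measure_biUnion_finset_le _ _).trans ?_
      simp [vol]
    have h3 := measure_mono (μ := (volume : Measure (C × C))) sub
    rw [hT.measure_preimage
      (Finset.measurableSet_biUnion _ fun k _ => meas k).nullMeasurableSet, h1] at h3
    have h4 := h3.trans h2
    rw [ENNReal.mul_le_mul_iff_left c_zero c_top] at h4
    exact_mod_cast h4)
  refine ⟨Equiv.ofBijective f (Finite.injective_iff_bijective.1 hf), fun k => ?_⟩
  exact (Finset.mem_filter.1 (hfN k)).2

/-- corner with linear index -/
noncomputable def P (n i : ℕ) : C × C := ((((i / n : ℕ) : ℝ) / n : ℝ), ((i : ℝ) / n : ℝ))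

theorem dist_P_succ {n : ℕ} (hn : 0 < n) (i : ℕ) : dist (P n i) (P n (i + 1)) ≤ 1 / n := by
  have hn' : (0 : ℝ) < n := by exact_mod_cast hn
  have key : ∀ a b : ℕ, a ≤ b → b ≤ a + 1 → dist (((a : ℝ) / n : ℝ) : C) (((b : ℝ) / n : ℝ) : C) ≤ 1 / n := by
    intro a b h1 h2
    refine (dist_coe_le _ _).trans ?_
    rw [← sub_div, abs_div, abs_of_pos hn']
    gcongr
    have h1' : (a : ℝ) ≤ b := by exact_mod_cast h1
    have h2' : (b : ℝ) ≤ a + 1 := by exact_mod_cast h2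
    rw [abs_le]; constructor <;> linarith
  refine max_le (key _ _ (Nat.div_le_div_right (by omega)) ?_) (key i (i + 1) (by omega) (by omega))
  calc (i + 1) / n ≤ (i + n) / n := Nat.div_le_div_right (by omega)
    _ = i / n + 1 := Nat.add_div_right _ hn

theorem dist_P {n : ℕ} (hn : 0 < n) {i j : ℕ} (h1 : i ≤ j + 2) (h2 : j ≤ i + 2) :
    dist (P n i) (P n j) ≤ 2 * (1 / n) := by
  wlog h : i ≤ j generalizing i j
  · rw [dist_comm]; exact this h2 h1 (by omega)
  have hn' : (0 : ℝ) ≤ 1 / n := by positivity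
  have e : j = i ∨ j = i + 1 ∨ j = i + 2 := by omega
  rcases e with rfl | rfl | rfl
  · rw [dist_self]; linarith
  · linarith [dist_P_succ hn i]
  · linarith [dist_P_succ hn i, dist_P_succ hn (i + 1), dist_triangle (P n i) (P n (i + 1)) (P n (i + 2))]

theorem P_eq {n : ℕ} (k : Fin n × Fin n) : P n (finProdFinEquiv k) =
    (((((k.1 : ℕ) : ℝ) / n : ℝ) : C), ((((k.2 : ℕ) : ℝ) / n : ℝ) : C)) := by
  have hn : 0 < n := by have := k.1.2; omega
  have hn' : (n : ℝ) ≠ 0 := by exact_mod_cast hn.ne'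
  refine Prod.ext ?_ ?_
  · simp only [P, finProdFinEquiv_apply_val]
    rw [Nat.add_mul_div_left _ _ hn, Nat.div_eq_of_lt k.2.2, zero_add]
  · simp only [P, finProdFinEquiv_apply_val]
    have : (((k.2 : ℕ) + n * (k.1 : ℕ) : ℕ) : ℝ) / n = ((k.2 : ℕ) : ℝ) / n + (k.1 : ℕ) • (1 : ℝ) := by
      push_cast; field_simp; simp
    rw [this, AddCircle.coe_add, AddCircle.coe_nsmul, AddCircle.coe_period]; simp

theorem dist_sq {n : ℕ} {k : Fin n × Fin n} {x : C × C} (hx : x ∈ sq n k) :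
    dist x (P n (finProdFinEquiv k)) ≤ 1 / n := by
  obtain ⟨⟨t, ht, h1⟩, ⟨u, hu, h2⟩⟩ := hx
  rw [P_eq]
  refine max_le ?_ ?_
  · rw [← h1]
    refine (dist_coe_le _ _).trans ?_
    rw [add_div] at ht
    rw [abs_le]; constructor <;> linarith [ht.1, ht.2]
  · rw [← h2]
    refine (dist_coe_le _ _).trans ?_
    rw [add_div] at hu
    rw [abs_le]; constructor <;> linarith [hu.1, hu.2]

end LaxAux

open LaxAux



/-- Lax approximation by cyclic cube exchange transformations on the two-torus
`𝕋² = (ℝ/ℤ) × (ℝ/ℤ)`: every measure-preserving homeomorphism `T` of `𝕋²` is, within any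
`ε > 0` in the uniform metric, approximated by the cyclic cube exchange transformation
determined by a permutation `σ` of the `n²` squares `[k₁/n,(k₁+1)/n) × [k₂/n,(k₂+1)/n)`
which is a single cycle on the whole index set: for every point `x` lying in the square
indexed by `k`, the distance from `T(x)` to the rigid translate of `x` by
`((σ(k)₁ − k₁)/n, (σ(k)₂ − k₂)/n)` is at most `ε`. -/
theorem lax_approximation_cyclic_cube_exchange
    (T : (AddCircle (1 : ℝ) × AddCircle (1 : ℝ)) ≃ₜ (AddCircle (1 : ℝ) × AddCircle (1 : ℝ)))
    (hT : MeasurePreserving T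
      (volume : Measure (AddCircle (1 : ℝ) × AddCircle (1 : ℝ))) volume) :
    ∀ ε : ℝ, 0 < ε →
      ∃ n : ℕ, 0 < n ∧ ∃ σ : Equiv.Perm (Fin n × Fin n),
        (∀ k k' : Fin n × Fin n, ∃ m : ℕ, (σ ^ m) k = k') ∧
        ∀ (x : AddCircle (1 : ℝ) × AddCircle (1 : ℝ)) (k : Fin n × Fin n) (t₁ t₂ : ℝ),
          t₁ ∈ Set.Ico (((k.1 : ℕ) : ℝ) / n) ((((k.1 : ℕ) : ℝ) + 1) / n) →
          t₂ ∈ Set.Ico (((k.2 : ℕ) : ℝ) / n) ((((k.2 : ℕ) : ℝ) + 1) / n) →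
          x = ((t₁ : AddCircle (1 : ℝ)), (t₂ : AddCircle (1 : ℝ))) →
          dist (T x)
            (x + (((((((σ k).1 : ℕ) : ℝ) - ((k.1 : ℕ) : ℝ)) / n : ℝ) : AddCircle (1 : ℝ)),
                  ((((((σ k).2 : ℕ) : ℝ) - ((k.2 : ℕ) : ℝ)) / n : ℝ) : AddCircle (1 : ℝ))))
            ≤ ε := by
  intro ε hε
  have huc : UniformContinuous T := CompactSpace.uniformContinuous_of_continuous T.continuous
  obtain ⟨δ, hδ, hδT⟩ := Metric.uniformContinuous_iff.1 huc (ε / 2) (by linarith)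
  obtain ⟨m, hm⟩ := exists_nat_one_div_lt (show 0 < min (δ / 2) (ε / 8) by positivity)
  obtain ⟨n, hnm⟩ : ∃ n, n = m + 1 := ⟨_, rfl⟩
  have hn : 0 < n := by omega
  have hm' : (1 : ℝ) / n < min (δ / 2) (ε / 8) := by rw [hnm]; exact_mod_cast hm
  have hnδ := hm'.trans_le (min_le_left _ _)
  have hnε := hm'.trans_le (min_le_right _ _)
  obtain ⟨s, hs⟩ := exists_perm T hT hn
  let e : Fin n × Fin n ≃ Fin (n * n) := finProdFinEquiv
  obtain ⟨r, hr1, hr2⟩ := cyclic_fin (n * n) ((e.symm.trans s).trans e)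
  let σ : Equiv.Perm (Fin n × Fin n) := (e.trans r).trans e.symm
  have hσ : ∀ k, e (σ k) = r (e k) := fun k => by simp [σ]
  have hpow : ∀ (m : ℕ) k, e ((σ ^ m) k) = (r ^ m) (e k) := by
    intro m k
    induction m with
    | zero => rfl
    | succ m ih => rw [pow_succ', pow_succ', Equiv.Perm.mul_apply, Equiv.Perm.mul_apply, hσ, ih]
  refine ⟨n, hn, σ, ?_, ?_⟩
  · intro k k'
    obtain ⟨m, hm⟩ := (hr1 (e k) (e k')).exists_nat_pow_eq
    exact ⟨m, e.injective ((hpow m k).trans hm)⟩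
  · intro x k t₁ t₂ h₁ h₂ hx
    have hxk : x ∈ sq n k := by rw [hx]; exact ⟨⟨t₁, h₁, rfl⟩, ⟨t₂, h₂, rfl⟩⟩
    obtain ⟨y, hy, hTy⟩ := hs k
    have d1 : dist x y < δ := by
      have := dist_triangle_right x y (P n (finProdFinEquiv k))
      linarith [dist_sq hxk, dist_sq hy]
    have d2 := hδT d1
    have d3 := dist_sq hTy
    have d4 : dist (P n (finProdFinEquiv (s k))) (P n (finProdFinEquiv (σ k))) ≤ 2 * (1 / n) := by
      have h := hr2 (e k)
      rw [← hσ] at h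
      simp only [Equiv.trans_apply, Equiv.symm_apply_apply] at h
      exact dist_P hn h.2 h.1
    set z := x + (((((((σ k).1 : ℕ) : ℝ) - ((k.1 : ℕ) : ℝ)) / n : ℝ) : AddCircle (1 : ℝ)),
                  ((((((σ k).2 : ℕ) : ℝ) - ((k.2 : ℕ) : ℝ)) / n : ℝ) : AddCircle (1 : ℝ))) with hz
    have hzk : z ∈ sq n (σ k) := by
      rw [hz, hx]
      rw [Set.mem_Ico, add_div] at h₁ h₂
      refine ⟨⟨t₁ + (((σ k).1 : ℕ) - ((k.1 : ℕ) : ℝ)) / n, ?_, ?_⟩,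
        ⟨t₂ + (((σ k).2 : ℕ) - ((k.2 : ℕ) : ℝ)) / n, ?_, ?_⟩⟩
      · rw [sub_div, Set.mem_Ico, add_div]; constructor <;> linarith [h₁.1, h₁.2]
      · exact AddCircle.coe_add _ _ _
      · rw [sub_div, Set.mem_Ico, add_div]; constructor <;> linarith [h₂.1, h₂.2]
      · exact AddCircle.coe_add _ _ _
    have d5 := dist_sq hzk
    have e1 := dist_triangle (T x) (T y) z
    have e2 := dist_triangle (T y) (P n (finProdFinEquiv (s k))) z
    have e3 := dist_triangle_right (P n (finProdFinEquiv (s k))) z (P n (finProdFinEquiv (σ k)))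
    linarith
end

section
/- Cayley–Hamilton identity for periodic Jacobi operators: let p ≥ 3 and let a, b, c : ℤ → ℂ be p-periodic sequences (a(n+p) = a(n), b(n+p) = b(n), c(n+p) = c(n) for all n). Let L be the linear endomorphism of the space of all complex sequences (ℤ → ℂ) defined by (Lu)(n) = a(n)·u(n+1) + c(n−1)·u(n−1) + b(n)·u(n), let M = L_per(1) be the p×p matrix with diagonal entries b(i), superdiagonal entries a(i) (0 ≤ i ≤ p−2), subdiagonal entries c(i) (0 ≤ i ≤ p−2), corner entries M_{0,p−1} = c(p−1) and M_{p−1,0} = a(p−1), and let χ(z) = det(z·I − M) be its characteristic polynomial. Then, with A = ∏_{i=0}^{p−1} a(i) and C = ∏_{i=0}^{p−1} c(i), the operator obtained by evaluating χ at L satisfies, for every sequence u and every n ∈ ℤ: (χ(L)u)(n) = A·u(n+p) + C·u(n−p) − (A + C)·u(n). -/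
/-- The `p`-periodic Jacobi operator `(Lu)(n) = a(n)·u(n+1) + c(n−1)·u(n−1) + b(n)·u(n)`
as a linear endomorphism of the space of all complex bi-infinite sequences. -/
def jacobiEnd (a b c : ℤ → ℂ) : Module.End ℂ (ℤ → ℂ) where
  toFun u := fun n => a n * u (n + 1) + c (n - 1) * u (n - 1) + b n * u n
  map_add' u v := by
    funext n
    simp only [Pi.add_apply]
    ring
  map_smul' r u := by
    funext n
    simp only [Pi.smul_apply, smul_eq_mul, RingHom.id_apply]
    ring

/-- The period matrix `M = L_per(1)`: diagonal `b(i)`, superdiagonal `a(i)`, subdiagonal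
`c(i)`, corner entries `M_{0,p−1} = c(p−1)` and `M_{p−1,0} = a(p−1)`. -/
def periodMatrix (p : ℕ) (a b c : ℤ → ℂ) : Matrix (Fin p) (Fin p) ℂ :=
  Matrix.of fun i j =>
    if i = j then b ((i : ℕ) : ℤ)
    else if (j : ℕ) = (i : ℕ) + 1 then a ((i : ℕ) : ℤ)
    else if (i : ℕ) = (j : ℕ) + 1 then c ((j : ℕ) : ℤ)
    else if (i : ℕ) = 0 ∧ (j : ℕ) = p - 1 then c ((j : ℕ) : ℤ)
    else if (i : ℕ) = p - 1 ∧ (j : ℕ) = 0 then a ((i : ℕ) : ℤ)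
    else 0

theorem det_add_single_aux {n : ℕ} {R : Type*} [CommRing R] (A : Matrix (Fin n) (Fin n) R)
    (i j : Fin n) (x : R) :
    (A + Matrix.single i j x).det = A.det + x * A.adjugate j i := by
  have h : A + Matrix.single i j x = A.updateRow i (A i + x • Pi.single j 1) := by
    ext k l
    by_cases hk : k = i
    · subst hk
      by_cases hl : l = j
      · subst hl; simp
      · simp [hl, Matrix.single, Ne.symm hl]
    · simp [hk, Matrix.single, Ne.symm hk]
  rw [h, Matrix.det_updateRow_add, Matrix.det_updateRow_smul, Matrix.adjugate_apply,
    Matrix.updateRow_eq_self]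

theorem det_tridiag_corner {n : ℕ} (hn : 1 ≤ n) {R : Type*} [CommRing R]
    (A : Matrix (Fin (n + 1)) (Fin (n + 1)) R)
    (hA1 : ∀ i j : Fin (n + 1), (i : ℕ) + 1 < j → A i j = 0)
    (hA2 : ∀ i j : Fin (n + 1), (j : ℕ) + 1 < i → A i j = 0) :
    ∃ g : R, ∀ x y : R,
      (A + Matrix.single (Fin.last n) 0 y + Matrix.single 0 (Fin.last n) x).det
        = A.det + (-1) ^ n * (x * ∏ i : Fin n, A i.succ i.castSucc
            + y * ∏ i : Fin n, A i.castSucc i.succ) + x * y * g := by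
  have hl : Fin.last n ≠ 0 := by
    intro h
    have := congrArg Fin.val h
    simp at this
    omega
  refine ⟨(A.updateRow 0 (Pi.single (Fin.last n) 1)).adjugate 0 (Fin.last n), fun x y => ?_⟩
  have e1 : A.adjugate (Fin.last n) 0 = (-1) ^ n * ∏ i : Fin n, A i.succ i.castSucc := by
    rw [Matrix.adjugate_fin_succ_eq_det_submatrix, Matrix.det_of_isUpperTriangular]
    · simp
    · intro i j hij
      simp only [id] at hij
      simp only [Matrix.submatrix_apply, Fin.succAbove_zero, Fin.succAbove_last]
      apply hA2
      simp
      exact hij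
  have e2 : A.adjugate 0 (Fin.last n) = (-1) ^ n * ∏ i : Fin n, A i.castSucc i.succ := by
    rw [Matrix.adjugate_fin_succ_eq_det_submatrix, Matrix.det_of_isLowerTriangular]
    · simp
    · intro i j hij
      simp only [OrderDual.toDual_lt_toDual] at hij
      simp only [Matrix.submatrix_apply, Fin.succAbove_zero, Fin.succAbove_last]
      apply hA1
      simp
      exact hij
  have e3 : (A + Matrix.single (Fin.last n) 0 y).adjugate (Fin.last n) 0
      = A.adjugate (Fin.last n) 0
        + y * (A.updateRow 0 (Pi.single (Fin.last n) 1)).adjugate 0 (Fin.last n) := by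
    rw [Matrix.adjugate_apply, Matrix.adjugate_apply A, ← det_add_single_aux]
    congr 1
    ext i j
    by_cases hi : i = 0
    · subst hi
      simp [Matrix.single, hl]
    · simp [hi]
  rw [det_add_single_aux, det_add_single_aux, e3, e1, e2]
  ring

/-- The tridiagonal part of the period matrix. -/
noncomputable def triPart (n : ℕ) (a b c : ℤ → ℂ) : Matrix (Fin (n + 1)) (Fin (n + 1)) ℂ :=
  Matrix.of fun i j =>
    (if (j : ℕ) = i then b ((i : ℕ) : ℤ) else 0)
    + (if (j : ℕ) = (i : ℕ) + 1 then a ((i : ℕ) : ℤ) else 0)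
    + (if (i : ℕ) = (j : ℕ) + 1 then c ((j : ℕ) : ℤ) else 0)

theorem periodMatrix_eq (n : ℕ) (hn : 2 ≤ n) (a b c : ℤ → ℂ) :
    periodMatrix (n + 1) a b c = triPart n a b c
      + Matrix.single (Fin.last n) 0 (a (n : ℤ)) + Matrix.single 0 (Fin.last n) (c (n : ℤ)) := by
  ext i j
  obtain ⟨i, hi⟩ := i
  obtain ⟨j, hj⟩ := j
  simp only [periodMatrix, triPart, Matrix.of_apply, Matrix.add_apply, Matrix.single, Fin.ext_iff,
    Fin.val_last, Fin.val_zero, Nat.add_sub_cancel]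
  split_ifs <;> first | omega | (simp; done) | (simp; congr 2; omega)

/-- The Floquet matrix with `s`, `t` in the corners. -/
noncomputable def floq (n : ℕ) (a b c : ℤ → ℂ) {R : Type*} [CommRing R] [Algebra ℂ R] (s t : R) :
    Matrix (Fin (n + 1)) (Fin (n + 1)) R :=
  (triPart n a b c).map (algebraMap ℂ R)
    + Matrix.single (Fin.last n) 0 (algebraMap ℂ R (a (n : ℤ)) * s)
    + Matrix.single 0 (Fin.last n) (algebraMap ℂ R (c (n : ℤ)) * t)

theorem charmatrix_add_single {m : ℕ} {R : Type*} [CommRing R] (A : Matrix (Fin m) (Fin m) R)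
    (i j : Fin m) (x : R) :
    (A + Matrix.single i j x).charmatrix
      = A.charmatrix + Matrix.single i j (Polynomial.C (-x)) := by
  ext1 k l
  simp only [Matrix.charmatrix_apply, Matrix.add_apply, Matrix.single, Matrix.of_apply]
  split_ifs <;> simp <;> ring

theorem floq_charpoly (n : ℕ) (hn : 2 ≤ n) (a b c : ℤ → ℂ) {R : Type*} [CommRing R]
    [Algebra ℂ R] (s t : R) (hst : s * t = 1) :
    (floq n a b c s t).charpoly = (floq n a b c (1 : R) 1).charpoly
      - Polynomial.C (algebraMap ℂ R (∏ i : Fin (n + 1), a ((i : ℕ) : ℤ)) * (s - 1)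
        + algebraMap ℂ R (∏ i : Fin (n + 1), c ((i : ℕ) : ℤ)) * (t - 1)) := by
  obtain ⟨g, hg⟩ := det_tridiag_corner (n := n) (by omega)
    (((triPart n a b c).map (algebraMap ℂ R)).charmatrix)
    (by
      intro i j h
      have h1 : i ≠ j := by rintro rfl; omega
      rw [Matrix.charmatrix_apply_ne _ _ _ h1]
      simp only [triPart, Matrix.map_apply, Matrix.of_apply]
      rw [if_neg (by omega), if_neg (by omega), if_neg (by omega)]
      simp)
    (by
      intro i j h
      have h1 : i ≠ j := by rintro rfl; omega
      rw [Matrix.charmatrix_apply_ne _ _ _ h1]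
      simp only [triPart, Matrix.map_apply, Matrix.of_apply]
      rw [if_neg (by omega), if_neg (by omega), if_neg (by omega)]
      simp)
  have e1 : ∏ i : Fin n, ((triPart n a b c).map (algebraMap ℂ R)).charmatrix i.succ i.castSucc
      = (-1) ^ n * Polynomial.C (algebraMap ℂ R (∏ i : Fin n, c ((i : ℕ) : ℤ))) := by
    rw [map_prod, map_prod]
    have : (-1 : Polynomial R) ^ n = ∏ i : Fin n, (-1 : Polynomial R) := by simp
    rw [this, ← Finset.prod_mul_distrib]
    refine Finset.prod_congr rfl fun i _ => ?_
    rw [Matrix.charmatrix_apply_ne _ _ _ (by simp [Fin.ext_iff])]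
    have h2 : ¬ ((i : ℕ) = (i : ℕ) + 1 + 1) := by omega
    simp [triPart, h2]
  have e2 : ∏ i : Fin n, ((triPart n a b c).map (algebraMap ℂ R)).charmatrix i.castSucc i.succ
      = (-1) ^ n * Polynomial.C (algebraMap ℂ R (∏ i : Fin n, a ((i : ℕ) : ℤ))) := by
    rw [map_prod, map_prod]
    have : (-1 : Polynomial R) ^ n = ∏ i : Fin n, (-1 : Polynomial R) := by simp
    rw [this, ← Finset.prod_mul_distrib]
    refine Finset.prod_congr rfl fun i _ => ?_
    rw [Matrix.charmatrix_apply_ne _ _ _ (by simp [Fin.ext_iff])]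
    have h2 : ¬ ((i : ℕ) = (i : ℕ) + 1 + 1) := by omega
    simp [triPart, h2]
  have key : ∀ s t : R, s * t = 1 → (floq n a b c s t).charpoly
      = (((triPart n a b c).map (algebraMap ℂ R)).charmatrix).det
        - Polynomial.C (algebraMap ℂ R (∏ i : Fin (n + 1), a ((i : ℕ) : ℤ)) * s
        + algebraMap ℂ R (∏ i : Fin (n + 1), c ((i : ℕ) : ℤ)) * t)
        + Polynomial.C (algebraMap ℂ R (a n * c n)) * g := by
    intro s t hst
    rw [Matrix.charpoly, floq, charmatrix_add_single, charmatrix_add_single, hg, e1, e2,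
      Fin.prod_univ_castSucc, Fin.prod_univ_castSucc]
    have hs : (-1 : Polynomial R) ^ n * (-1) ^ n = 1 := by
      rw [← mul_pow]; simp
    have hst' : (Polynomial.C s : Polynomial R) * Polynomial.C t = 1 := by
      rw [← Polynomial.C_mul, hst, Polynomial.C_1]
    simp only [map_mul, map_add, map_neg, Fin.val_castSucc, Fin.val_last]
    generalize Polynomial.C ((algebraMap ℂ R) (∏ i : Fin n, a ((i : ℕ) : ℤ))) = PA
    generalize Polynomial.C ((algebraMap ℂ R) (∏ i : Fin n, c ((i : ℕ) : ℤ))) = PC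
    generalize Polynomial.C ((algebraMap ℂ R) (a n)) = A
    generalize Polynomial.C ((algebraMap ℂ R) (c n)) = B
    generalize ((-1 : Polynomial R) ^ n) = E at hs
    linear_combination (- B * Polynomial.C t * PC - A * Polynomial.C s * PA) * hs
      + A * B * g * hst'
  rw [key s t hst, key 1 1 (by simp)]
  simp only [map_mul, map_add, map_sub, map_one]
  ring

/-- Shift by `m * q`. -/
def shiftEnd (q : ℤ) (m : ℤ) : Module.End ℂ (ℤ → ℂ) where
  toFun u := fun k => u (k + m * q)
  map_add' u v := rfl
  map_smul' r u := rfl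

/-- The action of Laurent polynomials on sequences. -/
noncomputable def rho (q : ℤ) : LaurentPolynomial ℂ →ₐ[ℂ] Module.End ℂ (ℤ → ℂ) :=
  AddMonoidAlgebra.lift ℂ _ ℤ
    { toFun := fun m => shiftEnd q m.toAdd
      map_one' := by
        ext u k
        simp [shiftEnd]
      map_mul' := by
        intro x y
        refine LinearMap.ext fun u => funext fun k => ?_
        simp only [shiftEnd, toAdd_mul, Module.End.mul_apply, LinearMap.coe_mk, AddHom.coe_mk]
        congr 1
        ring }

theorem rho_T (q m : ℤ) (u : ℤ → ℂ) (k : ℤ) :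
    rho q (LaurentPolynomial.T m) u k = u (k + m * q) := by
  unfold rho LaurentPolynomial.T
  rw [AddMonoidAlgebra.lift_single, one_smul]
  rfl

theorem rho_comm (q : ℤ) (L : Module.End ℂ (ℤ → ℂ)) (hL : ∀ m, Commute L (shiftEnd q m))
    (r : LaurentPolynomial ℂ) : Commute L (rho q r) := by
  induction r using LaurentPolynomial.induction_on' with
  | add p r hp hr => rw [map_add]; exact hp.add_right hr
  | C_mul_T n x =>
    rw [LaurentPolynomial.C_eq_algebraMap, map_mul, AlgHom.commutes]
    have : rho q (LaurentPolynomial.T n) = shiftEnd q n :=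
      LinearMap.ext fun u => funext fun k => rho_T q n u k
    rw [this]
    exact Commute.mul_right (Algebra.commutes x L).symm (hL n)

theorem jacobi_comm (p : ℕ) (a b c : ℤ → ℂ)
    (hpa : ∀ n : ℤ, a (n + p) = a n) (hpb : ∀ n : ℤ, b (n + p) = b n)
    (hpc : ∀ n : ℤ, c (n + p) = c n) (m : ℤ) :
    Commute (jacobiEnd a b c) (shiftEnd p m) := by
  have ha := (Function.Periodic.int_mul (f := a) (c := (p : ℤ)) hpa m)
  have hb := (Function.Periodic.int_mul (f := b) (c := (p : ℤ)) hpb m)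
  have hc := (Function.Periodic.int_mul (f := c) (c := (p : ℤ)) hpc m)
  refine LinearMap.ext fun u => funext fun k => ?_
  simp only [Module.End.mul_apply, jacobiEnd, shiftEnd, LinearMap.coe_mk, AddHom.coe_mk]
  have h1 := ha k
  have h2 := hb k
  have h3 := hc (k - 1)
  simp only [Int.cast_id] at h1 h2 h3
  rw [h1, h2, show k + m * (p : ℤ) - 1 = k - 1 + m * p by ring, h3,
    show k + m * (p : ℤ) + 1 = k + 1 + m * p by ring]

open LaurentPolynomial in
theorem rho_X (n : ℕ) (hn : 2 ≤ n) (a b c : ℤ → ℂ)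
    (hpc : ∀ k : ℤ, c (k + (n + 1 : ℕ)) = c k) (u : ℤ → ℂ) (i : Fin (n + 1)) :
    jacobiEnd a b c u ((i : ℕ) : ℤ)
      = ∑ j : Fin (n + 1), rho ((n + 1 : ℕ) : ℤ)
          (floq n a b c (T 1 : LaurentPolynomial ℂ) (T (-1)) i j) u ((j : ℕ) : ℤ) := by
  have e : ∀ j : Fin (n + 1), rho ((n + 1 : ℕ) : ℤ)
      (floq n a b c (T 1 : LaurentPolynomial ℂ) (T (-1)) i j) u ((j : ℕ) : ℤ)
      = triPart n a b c i j * u ((j : ℕ) : ℤ)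
        + (if Fin.last n = i ∧ 0 = j then a n * u ((n + 1 : ℕ) : ℤ) else 0)
        + (if 0 = i ∧ Fin.last n = j then c n * u (-1) else 0) := by
    intro j
    simp only [floq, Matrix.add_apply, map_add, LinearMap.add_apply, Pi.add_apply,
      Matrix.map_apply, AlgHom.commutes, Matrix.single, Matrix.of_apply]
    congr 1
    · congr 1
      split_ifs with h
      · obtain ⟨_, rfl⟩ := h
        simp only [map_mul, AlgHom.commutes, Module.End.mul_apply, Module.algebraMap_end_apply,
          Pi.smul_apply, rho_T, smul_eq_mul]
        simp
      · simp
    · split_ifs with h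
      · obtain ⟨_, rfl⟩ := h
        simp only [map_mul, AlgHom.commutes, Module.End.mul_apply, Module.algebraMap_end_apply,
          Pi.smul_apply, rho_T, smul_eq_mul]
        simp
      · simp
  rw [Finset.sum_congr rfl fun j _ => e j, Finset.sum_add_distrib, Finset.sum_add_distrib]
  have s1 : ∑ j : Fin (n + 1), triPart n a b c i j * u ((j : ℕ) : ℤ)
      = b ((i : ℕ) : ℤ) * u ((i : ℕ) : ℤ)
       + (if (i : ℕ) < n then a ((i : ℕ) : ℤ) * u ((i : ℕ) + 1) else 0)
       + (if 0 < (i : ℕ) then c ((i : ℕ) - 1) * u ((i : ℕ) - 1) else 0) := by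
    simp only [triPart, Matrix.of_apply, add_mul, Finset.sum_add_distrib, ite_mul, zero_mul]
    congr 1
    · congr 1
      · rw [Finset.sum_eq_single i]
        · simp
        · intro j _ h; rw [if_neg]; exact fun h' => h (Fin.ext h')
        · simp
      · split_ifs with h
        · rw [Finset.sum_eq_single ⟨i + 1, by omega⟩]
          · simp
          · intro j _ h; rw [if_neg]; exact fun h' => h (Fin.ext h')
          · simp
        · exact Finset.sum_eq_zero fun j _ => if_neg (by omega)
    · split_ifs with h
      · have hc : (((i : ℕ) - 1 : ℕ) : ℤ) = (i : ℕ) - 1 := by omega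
        rw [Finset.sum_eq_single ⟨i - 1, by omega⟩]
        · simp only []
          rw [if_pos (by omega), hc]
        · intro j _ h; rw [if_neg]; intro h'; apply h; apply Fin.ext; simp; omega
        · simp
      · exact Finset.sum_eq_zero fun j _ => if_neg (by omega)
  have s2 : ∑ j : Fin (n + 1), (if Fin.last n = i ∧ 0 = j then a n * u ((n + 1 : ℕ) : ℤ) else 0)
      = if (i : ℕ) = n then a n * u ((n + 1 : ℕ) : ℤ) else 0 := by
    by_cases h : Fin.last n = i
    · simp [← h]
    · have : (i : ℕ) ≠ n := fun h' => h (Fin.ext h'.symm)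
      simp [h, this]
  have s3 : ∑ j : Fin (n + 1), (if 0 = i ∧ Fin.last n = j then c n * u (-1) else 0)
      = if (i : ℕ) = 0 then c n * u (-1) else 0 := by
    by_cases h : 0 = i
    · simp [← h]
    · have : (i : ℕ) ≠ 0 := fun h' => h (Fin.ext h'.symm)
      simp [h, this]
  rw [s1, s2, s3]
  simp only [jacobiEnd, LinearMap.coe_mk, AddHom.coe_mk]
  have t1 : (if (i : ℕ) < n then a ((i : ℕ) : ℤ) * u ((i : ℕ) + 1) else 0)
      + (if (i : ℕ) = n then a n * u ((n + 1 : ℕ) : ℤ) else 0)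
      = a ((i : ℕ) : ℤ) * u ((i : ℕ) + 1) := by
    rcases Nat.lt_or_ge (i : ℕ) n with h | h
    · rw [if_pos h, if_neg (by omega), add_zero]
    · have : (i : ℕ) = n := by omega
      rw [if_neg (by omega), if_pos this, this]; simp
  have t2 : (if 0 < (i : ℕ) then c ((i : ℕ) - 1) * u ((i : ℕ) - 1) else 0)
      + (if (i : ℕ) = 0 then c n * u (-1) else 0)
      = c ((i : ℕ) - 1) * u ((i : ℕ) - 1) := by
    rcases Nat.eq_zero_or_pos (i : ℕ) with h | h
    · have := hpc (-1)
      rw [if_neg (by omega), if_pos h, h, zero_add]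
      simp only [Nat.cast_zero, zero_sub]
      rw [← this]
      congr 2
      push_cast
      ring
    · rw [if_pos h, if_neg (by omega), add_zero]
  linear_combination -t1 - t2

theorem rho_poly (n : ℕ) (q : ℤ) (L : Module.End ℂ (ℤ → ℂ))
    (hL : ∀ m, Commute L (shiftEnd q m))
    (M : Matrix (Fin (n + 1)) (Fin (n + 1)) (LaurentPolynomial ℂ))
    (hM : ∀ u (i : Fin (n + 1)), L u ((i : ℕ) : ℤ)
      = ∑ j : Fin (n + 1), rho q (M i j) u ((j : ℕ) : ℤ)) (f : Polynomial ℂ) :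
    (∀ r, Commute (Polynomial.aeval L f) (rho q r)) ∧
    ∀ u (i : Fin (n + 1)), Polynomial.aeval L f u ((i : ℕ) : ℤ)
      = ∑ j : Fin (n + 1), rho q (Polynomial.aeval M f i j) u ((j : ℕ) : ℤ) := by
  have hC : ∀ x : ℂ, ∀ u (i : Fin (n + 1)),
      Polynomial.aeval L (Polynomial.C x) u ((i : ℕ) : ℤ)
      = ∑ j : Fin (n + 1), rho q (Polynomial.aeval M (Polynomial.C x) i j) u ((j : ℕ) : ℤ) := by
    intro x u i
    rw [Polynomial.aeval_C, Polynomial.aeval_C, Finset.sum_eq_single i]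
    · rw [Matrix.algebraMap_matrix_apply, if_pos rfl, AlgHom.commutes]
    · intro j _ h
      rw [Matrix.algebraMap_matrix_apply, if_neg h.symm]; simp
    · simp
  induction f using Polynomial.induction_on with
  | C x =>
    refine ⟨fun r => ?_, hC x⟩
    rw [Polynomial.aeval_C]
    exact Algebra.commutes x _
  | add f g hf hg =>
    refine ⟨fun r => ?_, fun u i => ?_⟩
    · rw [map_add]; exact (hf.1 r).add_left (hg.1 r)
    · rw [map_add, map_add, LinearMap.add_apply, Pi.add_apply, hf.2, hg.2,
        ← Finset.sum_add_distrib]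
      refine Finset.sum_congr rfl fun j _ => ?_
      rw [Matrix.add_apply, map_add]; rfl
  | monomial k x hf =>
    rw [pow_succ, ← mul_assoc]
    refine ⟨fun r => ?_, fun u i => ?_⟩
    · rw [map_mul, Polynomial.aeval_X]
      exact (hf.1 r).mul_left (rho_comm q L hL r)
    · rw [map_mul (Polynomial.aeval L) (_ * _) _, map_mul (Polynomial.aeval M) (_ * _) _,
        Polynomial.aeval_X, Polynomial.aeval_X, Module.End.mul_apply, hf.2]
      generalize (Polynomial.aeval M) (Polynomial.C x * Polynomial.X ^ k) = N
      have e : ∀ j : Fin (n + 1), rho q (N i j) (L u) ((j : ℕ) : ℤ)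
          = ∑ l : Fin (n + 1), rho q (N i j * M j l) u ((l : ℕ) : ℤ) := by
        intro j
        have h := LinearMap.congr_fun (rho_comm q L hL (N i j)).eq u
        simp only [Module.End.mul_apply] at h
        rw [← h, hM]
        refine Finset.sum_congr rfl fun l _ => ?_
        rw [mul_comm, map_mul, Module.End.mul_apply]
      rw [Finset.sum_congr rfl fun j _ => e j, Finset.sum_comm]
      refine Finset.sum_congr rfl fun l _ => ?_
      rw [Matrix.mul_apply, map_sum, LinearMap.sum_apply, Finset.sum_apply]

/-- Cayley–Hamilton identity for periodic Jacobi operators: for `p ≥ 3` and `p`-periodic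
sequences `a, b, c`, evaluating the characteristic polynomial `χ` of the period matrix at
the Jacobi operator `L` yields `χ(L) = A·τ^p + C·τ^{−p} − (A + C)`, where `A = ∏ a(i)`,
`C = ∏ c(i)` and `τ` is the shift. -/
theorem charpoly_eval_jacobi (p : ℕ) (hp : 3 ≤ p) (a b c : ℤ → ℂ)
    (hpa : ∀ n : ℤ, a (n + p) = a n) (hpb : ∀ n : ℤ, b (n + p) = b n)
    (hpc : ∀ n : ℤ, c (n + p) = c n) :
    ∀ (u : ℤ → ℂ) (n : ℤ),
      (Polynomial.aeval (jacobiEnd a b c) (periodMatrix p a b c).charpoly) u n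
        = (∏ i : Fin p, a ((i : ℕ) : ℤ)) * u (n + p)
          + (∏ i : Fin p, c ((i : ℕ) : ℤ)) * u (n - p)
          - ((∏ i : Fin p, a ((i : ℕ) : ℤ)) + (∏ i : Fin p, c ((i : ℕ) : ℤ))) * u n := by
  intro u k
  obtain ⟨n, rfl⟩ : ∃ n, p = n + 1 := ⟨p - 1, by omega⟩
  have hn : 2 ≤ n := by omega
  set q : ℤ := ((n + 1 : ℕ) : ℤ) with hq
  set A := ∏ i : Fin (n + 1), a ((i : ℕ) : ℤ) with hA
  set C := ∏ i : Fin (n + 1), c ((i : ℕ) : ℤ) with hC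
  set χ := (periodMatrix (n + 1) a b c).charpoly with hχ
  set M := floq n a b c (LaurentPolynomial.T 1 : LaurentPolynomial ℂ) (LaurentPolynomial.T (-1))
    with hMdef
  have hM1 : (periodMatrix (n + 1) a b c).map (algebraMap ℂ (LaurentPolynomial ℂ))
      = floq n a b c (1 : LaurentPolynomial ℂ) 1 := by
    rw [periodMatrix_eq n hn, floq]
    ext1 i j
    simp only [Matrix.map_apply, Matrix.add_apply, map_add, Matrix.single, Matrix.of_apply,
      apply_ite (algebraMap ℂ (LaurentPolynomial ℂ)), map_zero, mul_one]
  have hch := floq_charpoly n hn a b c (LaurentPolynomial.T 1 : LaurentPolynomial ℂ)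
    (LaurentPolynomial.T (-1)) (by rw [← LaurentPolynomial.T_add]; simp)
  rw [← hM1, Matrix.charpoly_map, ← hχ, ← hMdef, ← hA, ← hC] at hch
  have hCH := Matrix.aeval_self_charpoly M
  rw [hch, map_sub, Polynomial.aeval_map_algebraMap, Polynomial.aeval_C, sub_eq_zero] at hCH
  obtain ⟨h1, h2⟩ := rho_poly n q (jacobiEnd a b c)
    (jacobi_comm (n + 1) a b c hpa hpb hpc) M (rho_X n hn a b c hpc) χ
  have hqpos : 0 < q := by omega
  have hbase : ∀ (v : ℤ → ℂ) (i : Fin (n + 1)), Polynomial.aeval (jacobiEnd a b c) χ v ((i : ℕ) : ℤ)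
      = A * v ((i : ℕ) + q) + C * v ((i : ℕ) - q) - (A + C) * v ((i : ℕ) : ℤ) := by
    intro v i
    rw [h2, hCH, Finset.sum_eq_single i]
    · rw [Matrix.algebraMap_matrix_apply, if_pos rfl, Algebra.algebraMap_self_apply]
      simp only [map_add, map_mul, map_sub, map_one, AlgHom.commutes, LinearMap.add_apply,
        LinearMap.sub_apply, Pi.add_apply, Pi.sub_apply,
        Module.End.mul_apply, Module.algebraMap_end_apply, Pi.smul_apply, rho_T, smul_eq_mul,
        Module.End.one_apply]
      rw [one_mul, neg_one_mul, ← sub_eq_add_neg]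
      ring
    · intro j _ h
      rw [Matrix.algebraMap_matrix_apply, if_neg h.symm]; simp
    · simp
  have hr0 := Int.emod_nonneg k hqpos.ne'
  have hr1 := Int.emod_lt_of_pos k hqpos
  have hdm := Int.emod_add_mul_ediv k q
  have hi : (((⟨(k % q).toNat, by omega⟩ : Fin (n + 1)) : ℕ) : ℤ) = k % q := by
    simp only []; omega
  have hk : k = k % q + (k / q) * q := by rw [mul_comm]; exact hdm.symm
  have h3 := hbase (rho q (LaurentPolynomial.T (k / q)) u) ⟨(k % q).toNat, by omega⟩
  rw [hi] at h3
  have h4 := LinearMap.congr_fun (h1 (LaurentPolynomial.T (k / q))).eq u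
  simp only [Module.End.mul_apply] at h4
  rw [h4, rho_T, rho_T, rho_T, rho_T, ← hk] at h3
  rw [h3, show k % q + q + k / q * q = k + q by linarith,
    show k % q - q + k / q * q = k - q by linarith]
end
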